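/- Every unitary operator on an infinite-dimensional complex Hilbert space H is a product of four symmetries, each of which can moreover be chosen so that both of its eigenspaces (for eigenvalues 1 and −1) are infinite-dimensional. -/

import Mathlib

open Submodule Set
open scoped InnerProductSpace

theorem not_finiteDimensional_eigenspaces_of_swap
    {H : Type*} [NormedAddCommGroup H] [InnerProductSpace ℂ H]
    {s : H ≃ₗᵢ[ℂ] H} (hs : s * s = 1) {K L : Submodule ℂ H} (hKL : K ⟂ L)
    (hK : ¬ FiniteDimensional ℂ K) (hmap : ∀ x ∈ K, s x ∈ L) :
    ¬ FiniteDimensional ℂ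
        (LinearMap.ker ((s.toLinearEquiv : H →ₗ[ℂ] H) - LinearMap.id)) ∧
      ¬ FiniteDimensional ℂ
        (LinearMap.ker ((s.toLinearEquiv : H →ₗ[ℂ] H) + LinearMap.id)) := by
  have hss (x : H) : s (s x) = x := congrArg (fun f : H ≃ₗᵢ[ℂ] H => f x) hs
  have hdisj : ∀ x ∈ K, x ∈ L → x = 0 := fun x hxK hxL =>
    (disjoint_def.1 hKL.disjoint) x hxK hxL
  constructor
  · intro hfin
    let f : K →ₗ[ℂ] LinearMap.ker ((s.toLinearEquiv : H →ₗ[ℂ] H) - LinearMap.id) :=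
      ((LinearMap.id + (s.toLinearEquiv : H →ₗ[ℂ] H)).domRestrict K).codRestrict _ fun x => by
        simp [LinearMap.mem_ker, hss, add_comm]
    refine hK (FiniteDimensional.of_injective f ((injective_iff_map_eq_zero f).2 fun x hx => ?_))
    have hx' : (x : H) + s x = 0 := congrArg Subtype.val hx
    refine Subtype.ext (hdisj x x.2 ?_)
    rw [eq_neg_of_add_eq_zero_left hx']
    exact L.neg_mem (hmap x x.2)
  · intro hfin
    let f : K →ₗ[ℂ] LinearMap.ker ((s.toLinearEquiv : H →ₗ[ℂ] H) + LinearMap.id) :=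
      ((LinearMap.id - (s.toLinearEquiv : H →ₗ[ℂ] H)).domRestrict K).codRestrict _ fun x => by
        simp [LinearMap.mem_ker, hss]
    refine hK (FiniteDimensional.of_injective f ((injective_iff_map_eq_zero f).2 fun x hx => ?_))
    have hx' : (x : H) - s x = 0 := congrArg Subtype.val hx
    refine Subtype.ext (hdisj x x.2 ?_)
    rw [sub_eq_zero.1 hx']
    exact hmap x x.2

namespace HilbertBasis

variable {H : Type*} [NormedAddCommGroup H] [InnerProductSpace ℂ H]
  {ι : Type*}

/-- The closed span of the basis vectors whose second index is `n`. -/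
def slab (b : HilbertBasis (ι × ℤ) ℂ H) (n : ℤ) : Submodule ℂ H :=
  (span ℂ (range fun i => b (i, n))).topologicalClosure

theorem mem_slab (b : HilbertBasis (ι × ℤ) ℂ H) (i : ι) (n : ℤ) : b (i, n) ∈ b.slab n :=
  le_topologicalClosure _ (subset_span ⟨i, rfl⟩)

theorem slab_induction (b : HilbertBasis (ι × ℤ) ℂ H) {n : ℤ} {f : H ≃ₗᵢ[ℂ] H}
    {K : Submodule ℂ H} (hK : IsClosed (K : Set H)) (h : ∀ i, f (b (i, n)) ∈ K) :
    ∀ x ∈ b.slab n, f x ∈ K := by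
  have : b.slab n ≤ K.comap (f.toLinearEquiv : H →ₗ[ℂ] H) := by
    refine topologicalClosure_minimal _ (span_le.2 ?_) (hK.preimage f.continuous)
    rintro _ ⟨i, rfl⟩
    exact h i
  exact this

theorem isClosed_slab (b : HilbertBasis (ι × ℤ) ℂ H) (n : ℤ) :
    IsClosed (b.slab n : Set H) := isClosed_topologicalClosure _

theorem isOrtho_slab (b : HilbertBasis (ι × ℤ) ℂ H) {m n : ℤ} (hmn : m ≠ n) :
    b.slab m ⟂ b.slab n := by
  have h : span ℂ (range fun i => b (i, m)) ⟂ span ℂ (range fun i => b (i, n)) := by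
    rw [isOrtho_span]
    rintro _ ⟨i, rfl⟩ _ ⟨j, rfl⟩
    exact b.orthonormal.inner_eq_zero fun h => hmn (congrArg Prod.snd h)
  refine topologicalClosure_minimal _ ?_ (isClosed_orthogonal _)
  rw [slab, orthogonal_closure]
  exact h

theorem not_finiteDimensional_slab [Infinite ι] (b : HilbertBasis (ι × ℤ) ℂ H) (n : ℤ) :
    ¬ FiniteDimensional ℂ (b.slab n) := by
  intro hfin
  have hli : LinearIndependent ℂ fun i => b (i, n) :=
    b.orthonormal.linearIndependent.comp (fun i => (i, n)) fun i j h => congrArg Prod.fst h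
  have : LinearIndependent ℂ fun i => (⟨b (i, n), b.mem_slab i n⟩ : b.slab n) :=
    LinearIndependent.of_comp (b.slab n).subtype hli
  exact not_finite_iff_infinite.2 ‹_› this.finite

theorem eq_of_eqOn_slab (b : HilbertBasis (ι × ℤ) ℂ H) {f g : H ≃ₗᵢ[ℂ] H}
    (h : ∀ n, ∀ x ∈ b.slab n, f x = g x) : f = g := by
  have : (f : H →L[ℂ] H) = g := by
    refine ContinuousLinearMap.ext_on (dense_iff_topologicalClosure_eq_top.2 b.dense_span) ?_
    rintro _ ⟨⟨i, n⟩, rfl⟩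
    exact h n _ (b.mem_slab i n)
  ext x
  exact congrArg (fun T : H →L[ℂ] H => T x) this

theorem exists_glue [CompleteSpace H] (b : HilbertBasis (ι × ℤ) ℂ H) (T : ℤ → H ≃ₗᵢ[ℂ] H)
    (π : Equiv.Perm ℤ) (hT : ∀ n, ∀ x ∈ b.slab n, T n x ∈ b.slab (π n))
    (hT' : ∀ n, ∀ x ∈ b.slab (π n), (T n)⁻¹ x ∈ b.slab n) :
    ∃ Q : H ≃ₗᵢ[ℂ] H, ∀ n, ∀ x ∈ b.slab n, Q x = T n x := by
  have hv : Orthonormal ℂ fun p : ι × ℤ => T p.2 (b p) := by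
    refine ⟨fun p => by simpa using b.orthonormal.1 p, ?_⟩
    rintro ⟨i, m⟩ ⟨j, n⟩ hne
    by_cases hmn : m = n
    · subst hmn
      simpa using b.orthonormal.2 hne
    · exact (isOrtho_iff_inner_eq.1 (b.isOrtho_slab (π.injective.ne hmn)) _
        (hT _ _ (b.mem_slab i m)) _ (hT _ _ (b.mem_slab j n)))
  have hsp : ⊤ ≤ (span ℂ (range fun p : ι × ℤ => T p.2 (b p))).topologicalClosure := by
    have hslab (n : ℤ) : ∀ x ∈ b.slab n,
        T n x ∈ (span ℂ (range fun p : ι × ℤ => T p.2 (b p))).topologicalClosure :=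
      b.slab_induction (isClosed_topologicalClosure _) fun i =>
        le_topologicalClosure _ (subset_span ⟨(i, n), rfl⟩)
    rw [← b.dense_span]
    refine topologicalClosure_minimal _ (span_le.2 ?_) (isClosed_topologicalClosure _)
    rintro _ ⟨⟨i, m⟩, rfl⟩
    obtain ⟨n, rfl⟩ := π.surjective m
    have := hslab n _ (hT' n _ (b.mem_slab i _))
    rwa [LinearIsometryEquiv.coe_inv, LinearIsometryEquiv.apply_symm_apply] at this
  let b' := HilbertBasis.mk hv hsp
  refine ⟨b.repr.trans b'.repr.symm, fun n x hx => ?_⟩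
  have hbasis (p : ι × ℤ) : b.repr.trans b'.repr.symm (b p) = T p.2 (b p) := by
    classical
    rw [LinearIsometryEquiv.trans_apply, b.repr_self, b'.repr_symm_single]
    exact congrFun (HilbertBasis.coe_mk hv hsp) p
  have hle : b.slab n ≤ LinearMap.eqLocus
      ((b.repr.trans b'.repr.symm).toLinearEquiv : H →ₗ[ℂ] H)
      ((T n).toLinearEquiv : H →ₗ[ℂ] H) := by
    refine topologicalClosure_minimal _ (span_le.2 ?_)
      (isClosed_eq (b.repr.trans b'.repr.symm).continuous (T n).continuous)
    rintro _ ⟨i, rfl⟩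
    exact hbasis (i, n)
  exact hle hx

/-- A unitary that shifts the slabs of a Hilbert basis by one is a product of two symmetries with
infinite-dimensional eigenspaces. -/
theorem exists_eq_mul_symmetries_of_shift [CompleteSpace H] [Infinite ι]
    (b : HilbertBasis (ι × ℤ) ℂ H) (V : H ≃ₗᵢ[ℂ] H)
    (hV : ∀ n, ∀ x ∈ b.slab n, V x ∈ b.slab (n + 1))
    (hV' : ∀ n, ∀ x ∈ b.slab n, V⁻¹ x ∈ b.slab (n - 1)) :
    ∃ s t : H ≃ₗᵢ[ℂ] H, V = s * t ∧ ∀ r ∈ ({s, t} : Set (H ≃ₗᵢ[ℂ] H)),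
      r * r = 1 ∧
        ¬ FiniteDimensional ℂ
          (LinearMap.ker ((r.toLinearEquiv : H →ₗ[ℂ] H) - LinearMap.id)) ∧
        ¬ FiniteDimensional ℂ
          (LinearMap.ker ((r.toLinearEquiv : H →ₗ[ℂ] H) + LinearMap.id)) := by
  have hpow (k : ℤ) : ∀ n m, m = n + k → ∀ x ∈ b.slab n, (V ^ k) x ∈ b.slab m := by
    induction k with
    | zero => rintro n m rfl x hx; simpa using hx
    | succ k ih =>
      rintro n m rfl x hx
      rw [zpow_add_one, LinearIsometryEquiv.coe_mul, Function.comp_apply]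
      exact ih (n + 1) _ (by ring) _ (hV n x hx)
    | pred k ih =>
      rintro n m rfl x hx
      rw [zpow_sub_one, LinearIsometryEquiv.coe_mul, Function.comp_apply]
      exact ih (n - 1) _ (by ring) _ (hV' n x hx)
  have hzpow (j k : ℤ) (x : H) : (V ^ j) ((V ^ k) x) = (V ^ (j + k)) x := by
    rw [zpow_add]
    rfl
  obtain ⟨Q, hQ⟩ := b.exists_glue (fun n => V ^ (-2 * n)) (Equiv.neg ℤ)
    (fun n => hpow _ _ _ (by simp; ring))
    (fun n => by
      rw [← zpow_neg]
      exact hpow _ _ _ (by simp; ring))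
  have hQmap (n : ℤ) : ∀ x ∈ b.slab n, Q x ∈ b.slab (-n) := fun x hx => by
    rw [hQ n x hx]
    exact hpow _ _ _ (by ring) x hx
  have hQV (n : ℤ) : ∀ x ∈ b.slab n, (Q * V) x = (V ^ (-2 * n - 1)) x := fun x hx => by
    rw [LinearIsometryEquiv.coe_mul, Function.comp_apply, hQ _ _ (hV n x hx),
      show -2 * n - 1 = -2 * (n + 1) + 1 by ring, zpow_add_one]
    rfl
  have hQ2 : Q * Q = 1 := b.eq_of_eqOn_slab fun n x hx => by
    rw [LinearIsometryEquiv.coe_mul, Function.comp_apply, hQ _ _ (hQmap n x hx), hQ n x hx,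
      hzpow, show -2 * -n + -2 * n = 0 by ring, zpow_zero]
  have hQV2 : (Q * V) * (Q * V) = 1 := b.eq_of_eqOn_slab fun n x hx => by
    rw [LinearIsometryEquiv.coe_mul, Function.comp_apply, hQV n x hx,
      hQV (-n - 1) _ (hpow _ _ _ (by ring) x hx),
      hzpow, show -2 * (-n - 1) - 1 + (-2 * n - 1) = 0 by ring, zpow_zero]
  refine ⟨Q, Q * V, by rw [← mul_assoc, hQ2, one_mul], ?_⟩
  rintro r (rfl | rfl)
  · exact ⟨hQ2, not_finiteDimensional_eigenspaces_of_swap hQ2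
      (b.isOrtho_slab (show (1 : ℤ) ≠ -1 by decide)) (b.not_finiteDimensional_slab 1) (hQmap 1)⟩
  · exact ⟨hQV2, not_finiteDimensional_eigenspaces_of_swap hQV2
      (b.isOrtho_slab (show (0 : ℤ) ≠ -1 by decide)) (b.not_finiteDimensional_slab 0)
      fun x hx => hQmap 1 _ (hV 0 x hx)⟩

theorem exists_shift [CompleteSpace H] (b : HilbertBasis (ι × ℤ) ℂ H) :
    ∃ W : H ≃ₗᵢ[ℂ] H, (∀ n, ∀ x ∈ b.slab n, W x ∈ b.slab (n + 1)) ∧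
      ∀ n, ∀ x ∈ b.slab n, W⁻¹ x ∈ b.slab (n - 1) := by
  classical
  let e : ι × ℤ ≃ ι × ℤ := (Equiv.refl ι).prodCongr (Equiv.addRight 1)
  have hv : Orthonormal ℂ (b ∘ e) := b.orthonormal.comp _ e.injective
  have hsp : ⊤ ≤ (span ℂ (range (b ∘ e))).topologicalClosure := by
    rw [e.surjective.range_comp, b.dense_span]
  let b' := HilbertBasis.mk hv hsp
  have hW (i : ι) (n : ℤ) : b.repr.trans b'.repr.symm (b (i, n)) = b (i, n + 1) := by
    rw [LinearIsometryEquiv.trans_apply, b.repr_self, b'.repr_symm_single]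
    exact congrFun (HilbertBasis.coe_mk hv hsp) (i, n)
  refine ⟨b.repr.trans b'.repr.symm, fun n => ?_, fun n => ?_⟩
  · refine b.slab_induction (b.isClosed_slab _) fun i => ?_
    rw [hW]
    exact b.mem_slab i _
  · refine b.slab_induction (b.isClosed_slab _) fun i => ?_
    have : b (i, n) = b.repr.trans b'.repr.symm (b (i, n - 1)) := by
      rw [hW, sub_add_cancel]
    rw [this, LinearIsometryEquiv.coe_inv, LinearIsometryEquiv.symm_apply_apply]
    exact b.mem_slab i _

end HilbertBasis

section CyclicSubspaces

variable {H : Type*} [NormedAddCommGroup H] [InnerProductSpace ℂ H]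

theorem Orthonormal.countable_of_separableSpace [TopologicalSpace.SeparableSpace H]
    {ι : Type*} {v : ι → H} (hv : Orthonormal ℂ v) : Countable ι := by
  refine Pairwise.countable_of_isOpen_disjoint (s := fun i => Metric.ball (v i) (1 / 2)) ?_
    (fun _ => Metric.isOpen_ball) fun i => ⟨v i, Metric.mem_ball_self (by norm_num)⟩
  intro i j hij
  refine Metric.ball_disjoint_ball ?_
  have h := norm_sub_sq (𝕜 := ℂ) (v i) (v j)
  rw [hv.2 hij, hv.1 i, hv.1 j] at h
  rw [dist_eq_norm]
  norm_num at h
  nlinarith [norm_nonneg (v i - v j)]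

theorem Submodule.zpow_apply_mem {u : H ≃ₗᵢ[ℂ] H} {K : Submodule ℂ H}
    (hu : ∀ x ∈ K, u x ∈ K) (hu' : ∀ x ∈ K, u⁻¹ x ∈ K) (k : ℤ) : ∀ x ∈ K, (u ^ k) x ∈ K := by
  induction k with
  | zero => exact fun x hx => by simpa using hx
  | succ k ih =>
    intro x hx
    rw [zpow_add_one, LinearIsometryEquiv.coe_mul]
    exact ih _ (hu x hx)
  | pred k ih =>
    intro x hx
    rw [zpow_sub_one, LinearIsometryEquiv.coe_mul]
    exact ih _ (hu' x hx)

/-- The smallest closed subspace that contains `v` and reduces the unitary `u`. -/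
def cyclicSubspace (u : H ≃ₗᵢ[ℂ] H) (v : H) : Submodule ℂ H :=
  (span ℂ (range fun k : ℤ => (u ^ k) v)).topologicalClosure

variable {u : H ≃ₗᵢ[ℂ] H}

theorem zpow_apply_mem_cyclicSubspace (v : H) (k : ℤ) : (u ^ k) v ∈ cyclicSubspace u v :=
  le_topologicalClosure _ (subset_span ⟨k, rfl⟩)

theorem mem_cyclicSubspace_self (v : H) : v ∈ cyclicSubspace u v := by
  simpa using zpow_apply_mem_cyclicSubspace (u := u) v 0

theorem cyclicSubspace_le {v : H} {K : Submodule ℂ H} (hK : IsClosed (K : Set H))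
    (h : ∀ k : ℤ, (u ^ k) v ∈ K) : cyclicSubspace u v ≤ K := by
  refine topologicalClosure_minimal _ (span_le.2 ?_) hK
  rintro _ ⟨k, rfl⟩
  exact h k

theorem map_zpow_mem_cyclicSubspace {v : H} (j : ℤ) {x : H} (hx : x ∈ cyclicSubspace u v) :
    (u ^ j) x ∈ cyclicSubspace u v := by
  have : cyclicSubspace u v ≤
      (cyclicSubspace u v).comap ((u ^ j).toLinearEquiv : H →ₗ[ℂ] H) := by
    refine cyclicSubspace_le ((isClosed_topologicalClosure _).preimage (u ^ j).continuous)
      fun k => ?_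
    have h := zpow_apply_mem_cyclicSubspace (u := u) v (j + k)
    rw [zpow_add] at h
    exact h
  exact this hx

theorem cyclicSubspace_isOrtho {v w : H} (h : ∀ k : ℤ, ⟪(u ^ k) v, w⟫_ℂ = 0) :
    cyclicSubspace u v ⟂ cyclicSubspace u w := by
  refine cyclicSubspace_le (isClosed_orthogonal _) fun j => ?_
  rw [← span_singleton_le_iff_mem]
  change _ ⟂ _
  rw [isOrtho_comm]
  refine cyclicSubspace_le (isClosed_orthogonal _) fun k => ?_
  rw [mem_orthogonal_singleton_iff_inner_right, ← LinearIsometryEquiv.inner_map_map (u ^ (-k)),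
    ← h (-k + j), zpow_add]
  congr 1
  rw [zpow_neg]
  exact (u ^ k).symm_apply_apply w

theorem exists_orthonormal_cyclicSubspace [CompleteSpace H] {v : H} (hv : v ≠ 0) :
    ∃ w : Set H, w.Countable ∧ w.Nonempty ∧ Orthonormal ℂ ((↑) : w → H) ∧
      (span ℂ w).topologicalClosure = cyclicSubspace u v := by
  have : CompleteSpace (cyclicSubspace u v) :=
    (isClosed_topologicalClosure _).completeSpace_coe
  have : TopologicalSpace.SeparableSpace (cyclicSubspace u v) :=
    ((countable_range _).isSeparable.span (R := ℂ)).closure.separableSpace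
  obtain ⟨w, b, hb⟩ := exists_hilbertBasis ℂ (cyclicSubspace u v)
  have hcount : Countable w := b.orthonormal.countable_of_separableSpace
  have hon : Orthonormal ℂ fun x => (b x : H) :=
    b.orthonormal.comp_linearIsometry (cyclicSubspace u v).subtypeₗᵢ
  have hclosure : (span ℂ (range fun x => (b x : H))).topologicalClosure
      = cyclicSubspace u v := by
    refine le_antisymm (topologicalClosure_minimal _ (span_le.2 ?_)
      (isClosed_topologicalClosure _)) fun x hx => ?_
    · rintro _ ⟨x, rfl⟩
      exact (b x).2
    · have hmem : (⟨x, hx⟩ : cyclicSubspace u v) ∈ (span ℂ (range b)).topologicalClosure := by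
        rw [b.dense_span]
        trivial
      have := map_mem_closure continuous_subtype_val hmem
        (t := span ℂ (range fun x => (b x : H))) fun y hy => ?_
      · exact this
      · have := Submodule.mem_map_of_mem (f := (cyclicSubspace u v).subtype) hy
        rw [map_span, ← range_comp] at this
        exact this
  refine ⟨range fun x => (b x : H), countable_range _, ?_, hon.toSubtypeRange, hclosure⟩
  by_contra hempty
  rw [not_nonempty_iff_eq_empty] at hempty
  have hmem := mem_cyclicSubspace_self (u := u) v
  rw [← hclosure, hempty, span_empty] at hmem
  exact hv (by
    rwa [IsClosed.submodule_topologicalClosure_eq (by simp), mem_bot] at hmem)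

theorem exists_maximal_isOrtho_cyclicSubspace [CompleteSpace H] {S₀ : Set H}
    (h0 : ∀ v ∈ S₀, v ≠ 0)
    (hS₀ : S₀.Pairwise fun v w => cyclicSubspace u v ⟂ cyclicSubspace u w) :
    ∃ S : Set H, S₀ ⊆ S ∧ (∀ v ∈ S, v ≠ 0) ∧
      (S.Pairwise fun v w => cyclicSubspace u v ⟂ cyclicSubspace u w) ∧
      (⨆ v : S, cyclicSubspace u (v : H)).topologicalClosure = ⊤ := by
  obtain ⟨S, hsub, hS, hmax⟩ := zorn_subset_nonempty
    {S : Set H | (∀ v ∈ S, v ≠ 0) ∧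
      S.Pairwise fun v w => cyclicSubspace u v ⟂ cyclicSubspace u w}
    (fun c hc hchain _ => ⟨⋃₀ c, ⟨fun v ⟨s, hs, hvs⟩ => (hc hs).1 v hvs,
      (pairwise_sUnion hchain.directedOn).2 fun s hs => (hc hs).2⟩,
      fun s hs => subset_sUnion_of_mem hs⟩) S₀ ⟨h0, hS₀⟩
  refine ⟨S, hsub, hS.1, hS.2, ?_⟩
  rw [topologicalClosure_eq_top_iff, eq_bot_iff]
  intro x hx
  by_contra hx0
  have horth : ∀ v ∈ S, cyclicSubspace u v ⟂ cyclicSubspace u x := fun v hv =>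
    cyclicSubspace_isOrtho fun k => hx _ (mem_iSup_of_mem (⟨v, hv⟩ : S)
      (zpow_apply_mem_cyclicSubspace v k))
  have hxS : x ∈ S := by
    refine hmax (y := insert x S) ⟨?_, ?_⟩ (subset_insert x S) (mem_insert x S)
    · rintro v (rfl | hv)
      · exact hx0
      · exact hS.1 v hv
    · exact pairwise_insert.2 ⟨hS.2, fun v hv _ => ⟨(horth v hv).symm, horth v hv⟩⟩
  exact hx0 (inner_self_eq_zero.1 (isOrtho_iff_inner_eq.1 (horth x hxS) _
    (mem_cyclicSubspace_self x) _ (mem_cyclicSubspace_self x)))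

theorem LinearIsometryEquiv.isStarNormal_coe [CompleteSpace H] (u : H ≃ₗᵢ[ℂ] H) :
    IsStarNormal (u : H →L[ℂ] H) := by
  refine ⟨?_⟩
  rw [ContinuousLinearMap.star_eq_adjoint, LinearIsometryEquiv.adjoint_eq_symm]
  ext x
  simp

theorem finiteDimensional_of_finite_spectrum [CompleteSpace H]
    (hfin : Finite (spectrum ℂ (u : H →L[ℂ] H))) {S : Set H} (hS : S.Finite)
    (htop : (⨆ v : S, cyclicSubspace u (v : H)).topologicalClosure = ⊤) :
    FiniteDimensional ℂ H := by
  let φ := cfcHom (R := ℂ) u.isStarNormal_coe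
  obtain ⟨z, hφ⟩ : ∃ z, φ z = (u : H →L[ℂ] H) := ⟨_, cfcHom_id u.isStarNormal_coe⟩
  have hφ' : φ (star z) = (u.symm : H →L[ℂ] H) := by
    rw [← LinearIsometryEquiv.adjoint_eq_symm, ← ContinuousLinearMap.star_eq_adjoint, map_star, hφ]
  have : FiniteDimensional ℂ C(spectrum ℂ (u : H →L[ℂ] H), ℂ) :=
    FiniteDimensional.of_injective (ContinuousMap.coeFnLinearMap ℂ) DFunLike.coe_injective
  let K (v : H) : Submodule ℂ H := LinearMap.range
    ((ContinuousLinearMap.apply ℂ H v : (H →L[ℂ] H) →ₗ[ℂ] H) ∘ₗ φ.toAlgHom.toLinearMap)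
  have hKmem (v : H) : v ∈ K v := ⟨1, by simp⟩
  have hKmul (v : H) (g) : ∀ x ∈ K v, φ g x ∈ K v := by
    rintro _ ⟨f, rfl⟩
    exact ⟨g * f, by simp⟩
  have hle (v : H) : cyclicSubspace u v ≤ K v := by
    refine cyclicSubspace_le (K v).closed_of_finiteDimensional fun k =>
      zpow_apply_mem (fun x hx => ?_) (fun x hx => ?_) k v (hKmem v)
    · have := hKmul v z x hx
      rwa [hφ] at this
    · have := hKmul v (star z) x hx
      rwa [hφ'] at this
  have := hS.to_subtype
  have hK : (⨆ v : S, K v) = ⊤ := by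
    rw [eq_top_iff, ← htop]
    exact topologicalClosure_minimal _ (iSup_mono fun v => hle v)
      (⨆ v : S, K v).closed_of_finiteDimensional
  have hfd : FiniteDimensional ℂ (⨆ v : S, K v : Submodule ℂ H) := inferInstance
  rw [hK] at hfd
  exact Module.finite_def.2 (Module.Finite.iff_fg.1 hfd)

theorem exists_infinite_isOrtho_cyclicSubspace_of_infinite_spectrum [CompleteSpace H]
    (hinf : Infinite (spectrum ℂ (u : H →L[ℂ] H))) :
    ∃ S : Set H, S.Infinite ∧ (∀ v ∈ S, v ≠ 0) ∧
      S.Pairwise fun v w => cyclicSubspace u v ⟂ cyclicSubspace u w := by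
  let φ := cfcHom (R := ℂ) u.isStarNormal_coe
  obtain ⟨z, hφ⟩ : ∃ z, φ z = (u : H →L[ℂ] H) := ⟨_, cfcHom_id u.isStarNormal_coe⟩
  have hcomm (f) (k : ℤ) : ∀ x, (u ^ k) (φ f x) = φ f ((u ^ k) x) := by
    have h1 (x : H) : u (φ f x) = φ f (u x) := by
      have h : φ z * φ f = φ f * φ z := by
        rw [← map_mul, ← map_mul, mul_comm]
      rw [hφ] at h
      exact congrArg (fun T : H →L[ℂ] H => T x) h
    induction k with
    | zero => simp
    | succ k ih =>
      intro x
      rw [zpow_add_one, LinearIsometryEquiv.coe_mul, Function.comp_apply, h1, ih]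
      rfl
    | pred k ih =>
      intro x
      have h2 : u⁻¹ (φ f x) = φ f (u⁻¹ x) := by
        rw [LinearIsometryEquiv.coe_inv, LinearIsometryEquiv.symm_apply_eq, h1,
          LinearIsometryEquiv.apply_symm_apply]
      rw [zpow_sub_one, LinearIsometryEquiv.coe_mul, Function.comp_apply, h2, ih]
      rfl
  obtain ⟨U, hUinf, hUo, hUd⟩ :=
    exists_seq_infinite_isOpen_pairwise_disjoint (spectrum ℂ (u : H →L[ℂ] H))
  have hbump (n : ℕ) : ∃ f : C(spectrum ℂ (u : H →L[ℂ] H), ℂ), f ≠ 0 ∧ ∀ x ∉ U n, f x = 0 := by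
    obtain ⟨p, hp⟩ := (hUinf n).nonempty
    obtain ⟨f, hf0, hf1, -⟩ := exists_continuous_zero_one_of_isClosed (hUo n).isClosed_compl
      (isClosed_singleton (x := p)) (by simpa using hp)
    refine ⟨⟨fun x => (f x : ℂ), by fun_prop⟩, fun h => ?_, fun x hx => ?_⟩
    · have h1 : f p = 1 := hf1 rfl
      have := DFunLike.congr_fun h p
      simp [h1] at this
    · have h1 : f x = 0 := hf0 hx
      simp [h1]
  choose f hf0 hfU using hbump
  have hvec (n : ℕ) : ∃ x, φ (f n) x ≠ 0 := by
    by_contra! h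
    refine hf0 n ((map_eq_zero_iff φ (cfcHom_injective u.isStarNormal_coe)).1 ?_)
    ext x
    exact h x
  choose x hx using hvec
  have horth : ∀ m n, m ≠ n →
      cyclicSubspace u (φ (f m) (x m)) ⟂ cyclicSubspace u (φ (f n) (x n)) := by
    intro m n hmn
    refine cyclicSubspace_isOrtho fun k => ?_
    have hzero : star (f m) * f n = 0 := by
      ext y
      by_cases hy : y ∈ U m
      · have : y ∉ U n := fun hy' => Set.disjoint_left.1 (hUd hmn) hy hy'
        simp [hfU n y this]
      · simp [hfU m y hy]
    rw [hcomm, ← ContinuousLinearMap.adjoint_inner_right, ← ContinuousLinearMap.star_eq_adjoint,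
      ← map_star, ← mul_apply_eq_comp, ← map_mul, hzero]
    simp
  have hinj : Function.Injective fun n => φ (f n) (x n) := by
    intro m n hmn
    by_contra hne
    have h := horth m n hne
    rw [show φ (f m) (x m) = φ (f n) (x n) from hmn] at h
    exact hx n (inner_self_eq_zero.1 (isOrtho_iff_inner_eq.1 h _
      (mem_cyclicSubspace_self _) _ (mem_cyclicSubspace_self _)))
  refine ⟨range fun n => φ (f n) (x n), infinite_range_of_injective hinj, ?_, ?_⟩
  · rintro _ ⟨n, rfl⟩
    exact hx n
  · rintro _ ⟨m, rfl⟩ _ ⟨n, rfl⟩ hne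
    exact horth m n fun h => hne (by rw [h])

theorem exists_infinite_cyclicSubspace_decomposition [CompleteSpace H]
    (hinf : ¬ FiniteDimensional ℂ H) (u : H ≃ₗᵢ[ℂ] H) :
    ∃ S : Set H, S.Infinite ∧ (∀ v ∈ S, v ≠ 0) ∧
      (S.Pairwise fun v w => cyclicSubspace u v ⟂ cyclicSubspace u w) ∧
      (⨆ v : S, cyclicSubspace u (v : H)).topologicalClosure = ⊤ := by
  rcases finite_or_infinite (spectrum ℂ (u : H →L[ℂ] H)) with hfin | hspec
  · obtain ⟨S, -, h0, hS, htop⟩ := exists_maximal_isOrtho_cyclicSubspace (u := u) (S₀ := ∅)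
      (by simp) (by simp)
    exact ⟨S, fun h => hinf (finiteDimensional_of_finite_spectrum hfin h htop), h0, hS, htop⟩
  · obtain ⟨S₀, hS₀, h0, h1⟩ :=
      exists_infinite_isOrtho_cyclicSubspace_of_infinite_spectrum hspec
    obtain ⟨S, hsub, h⟩ := exists_maximal_isOrtho_cyclicSubspace h0 h1
    exact ⟨S, hS₀.mono hsub, h⟩

theorem nonempty_equiv_sigma_of_countable.{v} {α : Type v} [Infinite α] (F : α → Type v)
    [∀ a, Countable (F a)] [∀ a, Nonempty (F a)] : Nonempty (α ≃ Σ a, F a) := by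
  refine Cardinal.eq.1 (le_antisymm ?_ ?_)
  · exact Cardinal.mk_le_of_surjective (f := (Sigma.fst : (Σ a, F a) → α))
      fun a => ⟨⟨a, Classical.arbitrary _⟩, rfl⟩
  · rw [Cardinal.mk_sigma]
    refine (Cardinal.sum_le_sum _ (fun _ => Cardinal.aleph0) fun a => Cardinal.mk_le_aleph0).trans ?_
    simp

/-- An infinite-dimensional space splits into infinite-dimensional reducing subspaces of a unitary,
indexed by the integers and all of the same dimension. -/
theorem exists_hilbertBasis_reducing_slabs [CompleteSpace H]
    (hinf : ¬ FiniteDimensional ℂ H) (u : H ≃ₗᵢ[ℂ] H) :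
    ∃ (S : Set H) (_ : Infinite S) (b : HilbertBasis (S × ℤ) ℂ H),
      ∀ n, ∀ x ∈ b.slab n, u x ∈ b.slab n ∧ u⁻¹ x ∈ b.slab n := by
  obtain ⟨S, hSinf, h0, hS, htop⟩ := exists_infinite_cyclicSubspace_decomposition hinf u
  have := hSinf.to_subtype
  choose w hwc hwne hwo hwcl using fun v : S =>
    exists_orthonormal_cyclicSubspace (u := u) (h0 v v.2)
  have (v : S) : Countable (w v) := (hwc v).to_subtype
  have (v : S) : Nonempty (w v) := (hwne v).to_subtype
  obtain ⟨e⟩ : Nonempty (S ≃ S × ℤ) := Cardinal.eq.1 (by simp)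
  have hg (n : ℤ) := nonempty_equiv_sigma_of_countable fun s : S => w (e.symm (s, n))
  let g (n : ℤ) := (hg n).some
  let B (p : S × ℤ) : H := (g p.2 p.1).2
  have hwcyc (v : S) {y : H} (hy : y ∈ w v) : y ∈ cyclicSubspace u (v : H) := by
    rw [← hwcl]
    exact le_topologicalClosure _ (subset_span hy)
  have horth (v v' : S) {y y' : H} (hy : y ∈ w v) (hy' : y' ∈ w v') (hne : v = v' → y ≠ y') :
      ⟪y, y'⟫_ℂ = 0 := by
    by_cases hv : v = v'
    · subst hv
      exact (hwo v).2 (i := ⟨y, hy⟩) (j := ⟨y', hy'⟩) fun h => hne rfl (congrArg Subtype.val h)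
    · exact isOrtho_iff_inner_eq.1 (hS v.2 v'.2 (Subtype.coe_ne_coe.2 hv)) _ (hwcyc v hy) _
        (hwcyc v' hy')
  have hB : Orthonormal ℂ B := by
    refine ⟨fun p => (hwo _).1 (g p.2 p.1).2, ?_⟩
    rintro ⟨s, m⟩ ⟨t, n⟩ hne
    refine horth _ _ (g m s).2.2 (g n t).2.2 fun hv hy => hne ?_
    have h := Prod.mk.inj (e.symm.injective hv)
    obtain rfl : m = n := h.2
    rw [(g m).injective (Sigma.subtype_ext h.1 hy)]
  have hBw (n : ℤ) (s : S) {y : H} (hy : y ∈ w (e.symm (s, n))) : ∃ t, B (t, n) = y :=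
    ⟨(g n).symm ⟨s, y, hy⟩, by
      simp only [B]
      rw [Equiv.apply_symm_apply]⟩
  have hsp : ⊤ ≤ (span ℂ (range B)).topologicalClosure := by
    rw [← htop]
    refine topologicalClosure_minimal _ (iSup_le fun v => ?_) (isClosed_topologicalClosure _)
    rw [← hwcl]
    refine topologicalClosure_mono (span_mono fun y hy => ?_)
    obtain ⟨t, ht⟩ := hBw (e v).2 (e v).1 (y := y) (by simpa using hy)
    exact ⟨_, ht⟩
  let b := HilbertBasis.mk hB hsp
  have hb : ⇑b = B := HilbertBasis.coe_mk hB hsp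
  have hcyc (n : ℤ) (s : S) : cyclicSubspace u (e.symm (s, n) : H) ≤ b.slab n := by
    rw [← hwcl]
    refine topologicalClosure_mono (span_mono fun y hy => ?_)
    obtain ⟨t, ht⟩ := hBw n s hy
    exact ⟨t, by rw [hb]; exact ht⟩
  have hbcyc (n : ℤ) (s : S) : b (s, n) ∈ cyclicSubspace u (e.symm ((g n s).1, n) : H) := by
    rw [hb]
    exact hwcyc _ (g n s).2.2
  refine ⟨S, ‹_›, b, fun n x hx => ⟨?_, ?_⟩⟩
  · refine b.slab_induction (b.isClosed_slab n) (fun s => hcyc n (g n s).1 ?_) x hx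
    simpa using map_zpow_mem_cyclicSubspace 1 (hbcyc n s)
  · refine b.slab_induction (b.isClosed_slab n) (fun s => hcyc n (g n s).1 ?_) x hx
    simpa using map_zpow_mem_cyclicSubspace (-1) (hbcyc n s)

end CyclicSubspaces


/-- **Halmos–Kakutani.** Every unitary operator on an infinite-dimensional complex Hilbert
space is a product of four symmetries (unitary involutions), each of which can be chosen
so that both of its eigenspaces, for the eigenvalues `1` and `-1`, are
infinite-dimensional. -/
theorem unitary_eq_prod_four_symmetries
    {H : Type*} [NormedAddCommGroup H] [InnerProductSpace ℂ H] [CompleteSpace H]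
    (hinf : ¬ FiniteDimensional ℂ H) (u : H ≃ₗᵢ[ℂ] H) :
    ∃ s₁ s₂ s₃ s₄ : H ≃ₗᵢ[ℂ] H, u = s₁ * s₂ * s₃ * s₄ ∧
      ∀ s ∈ ({s₁, s₂, s₃, s₄} : Set (H ≃ₗᵢ[ℂ] H)),
        s * s = 1 ∧
        ¬ FiniteDimensional ℂ
          (LinearMap.ker ((s.toLinearEquiv : H →ₗ[ℂ] H) - LinearMap.id)) ∧
        ¬ FiniteDimensional ℂ
          (LinearMap.ker ((s.toLinearEquiv : H →ₗ[ℂ] H) + LinearMap.id)) := by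
  obtain ⟨S, _, b, hu⟩ := exists_hilbertBasis_reducing_slabs hinf u
  obtain ⟨W, hW, hW'⟩ := b.exists_shift
  obtain ⟨s₁, s₂, huW, h₁⟩ := b.exists_eq_mul_symmetries_of_shift (u * W)
    (fun n x hx => (hu _ _ (hW n x hx)).1)
    (fun n x hx => by
      rw [mul_inv_rev]
      exact hW' n _ (hu n x hx).2)
  obtain ⟨s₄, s₃, hWs, h₂⟩ := b.exists_eq_mul_symmetries_of_shift W hW hW'
  have h₃ := h₂ s₃ (by simp)
  have h₄ := h₂ s₄ (by simp)
  refine ⟨s₁, s₂, s₃, s₄, ?_, ?_⟩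
  · rw [← huW, mul_assoc, mul_assoc, hWs, mul_assoc, ← mul_assoc s₃, h₃.1, one_mul, h₄.1, mul_one]
  · rintro s (rfl | rfl | rfl | rfl)
    · exact h₁ _ (by simp)
    · exact h₁ _ (by simp)
    · exact h₃
    · exact h₄
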